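/- Let G=(V,E) be a 3-edge-connected cubic graph, let X ⊂ V be nonempty, let H be a component of G − X, and let f ∈ E(X, V(H)). Then there exists a (possibly trivial, i.e. single-vertex) path P ⊆ H with ends y₀, y₁ such that: P is peripheral in H; there exist distinct edges e₀, e₁ with e_i ∈ E(y_i, X) \ {f} for i = 0, 1; and no internal vertex of P has a neighbor in X. Moreover, if H is 2-edge-connected and y₀ ∈ V(H) is any prescribed vertex with E(y₀, X) \ {f} nonempty, then such a path P can be chosen with y₀ as one of its ends. -/

import Mathlib

open scoped Classical

/-- A multigraph with an orientation: each edge `e` has a source `src e` and a target `tgt e`.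
Loops and parallel edges are allowed. -/
structure Multigraph (V E : Type) where
  src : E → V
  tgt : E → V

namespace Multigraph

variable {V E : Type}

/-- `u` and `v` are joined by some edge satisfying the predicate `P`. -/
def adjVia (G : Multigraph V E) (P : E → Prop) (u v : V) : Prop :=
  ∃ e, P e ∧ ((G.src e = u ∧ G.tgt e = v) ∨ (G.src e = v ∧ G.tgt e = u))

/-- `v` is reachable from `u` using only edges satisfying `P`. -/
def Reaches (G : Multigraph V E) (P : E → Prop) : V → V → Prop :=
  Relation.ReflTransGen (G.adjVia P)

/-- The graph is connected when only edges satisfying `P` are kept (all edges deleted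
whose predicate fails, all vertices kept). -/
def ConnectedVia (G : Multigraph V E) (P : E → Prop) : Prop :=
  Nonempty V ∧ ∀ u v : V, G.Reaches P u v

def Connected (G : Multigraph V E) : Prop :=
  G.ConnectedVia fun _ => True

/-- `G` is `k`-edge-connected: it is connected and has no edge cut of size less than `k`;
equivalently, deleting any set of fewer than `k` edges leaves it connected. -/
def EdgeConnected (G : Multigraph V E) (k : ℕ) : Prop :=
  ∀ S : Set E, S.ncard < k → G.ConnectedVia fun e => e ∉ S

/-- The degree of a vertex (loops counted twice). -/
noncomputable def degree (G : Multigraph V E) (v : V) : ℕ :=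
  {e | G.src e = v}.ncard + {e | G.tgt e = v}.ncard

/-- Every vertex has degree exactly 3. -/
def Cubic (G : Multigraph V E) : Prop :=
  ∀ v : V, G.degree v = 3

/-- `φ : E → Γ` is a flow: at every vertex, the sum over outgoing edges equals the
sum over incoming edges. -/
def IsFlow [Fintype E] {Γ : Type} [AddCommGroup Γ] (G : Multigraph V E) (φ : E → Γ) : Prop :=
  ∀ v : V, (∑ e : E, if G.src e = v then φ e else 0) = ∑ e : E, if G.tgt e = v then φ e else 0

/-- The vertex `v` is an endpoint of some edge of `C`. -/
def touches (G : Multigraph V E) (C : Set E) (v : V) : Prop :=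
  ∃ e ∈ C, G.src e = v ∨ G.tgt e = v

/-- An edge set `C` is (the edge set of) a cycle: it is nonempty, every vertex it touches
has degree exactly 2 in it, and it is connected. -/
def IsCycle (G : Multigraph V E) (C : Set E) : Prop :=
  C.Nonempty ∧
  (∀ v : V, G.touches C v →
    ({e ∈ C | G.src e = v}.ncard + {e ∈ C | G.tgt e = v}.ncard = 2)) ∧
  (∀ u v : V, G.touches C u → G.touches C v → G.Reaches (· ∈ C) u v)

/-- `R` is `k`-closed: every cycle with at least one edge outside `R` has at least
`k+1` edges outside `R`. -/
def Closed (G : Multigraph V E) (k : ℕ) (R : Set E) : Prop :=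
  ∀ C : Set E, G.IsCycle C → (C \ R).Nonempty → k + 1 ≤ (C \ R).ncard

/-- The `k`-closure `⟨S⟩ₖ` of `S` : the minimal `k`-closed set containing `S`
(the family of `k`-closed sets is closed under intersections). -/
def kClosure (G : Multigraph V E) (k : ℕ) (S : Set E) : Set E :=
  ⋂₀ {R : Set E | S ⊆ R ∧ G.Closed k R}

/-- `S` is a `k`-base: its `k`-closure is the whole edge set. -/
def IsBase (G : Multigraph V E) (k : ℕ) (S : Set E) : Prop :=
  G.kClosure k S = Set.univ

/-- An edge set `S` is peripheral if `G − S` is connected. -/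
def Peripheral (G : Multigraph V E) (S : Set E) : Prop :=
  G.ConnectedVia fun e => e ∉ S

/-- The spanning subgraph `(V, F)` is a forest, i.e. contains no cycle. -/
def IsForest (G : Multigraph V E) (F : Set E) : Prop :=
  ∀ C : Set E, G.IsCycle C → ¬ C ⊆ F

/-- `vs`, `es` describe a path: distinct vertices `vs 0, …, vs n` and distinct edges
`es 0, …, es (n-1)` where `es i` joins `vs i` and `vs (i+1)`. -/
def IsPath (G : Multigraph V E) {n : ℕ} (vs : Fin (n + 1) → V) (es : Fin n → E) : Prop :=
  Function.Injective vs ∧ Function.Injective es ∧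
  ∀ i : Fin n,
    (G.src (es i) = vs i.castSucc ∧ G.tgt (es i) = vs i.succ) ∨
    (G.src (es i) = vs i.succ ∧ G.tgt (es i) = vs i.castSucc)

/-- The edge `e` has `y` as one endpoint and its other endpoint in `X`,
i.e. `e ∈ E(y, X)`. -/
def joins (G : Multigraph V E) (e : E) (y : V) (X : Set V) : Prop :=
  (G.src e = y ∧ G.tgt e ∈ X) ∨ (G.tgt e = y ∧ G.src e ∈ X)

/-- `W` is the vertex set of a connected component of `G − X`. -/
def IsComponent (G : Multigraph V E) (X W : Set V) : Prop :=
  W.Nonempty ∧ Disjoint W X ∧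
  (∀ u ∈ W, ∀ v : V, v ∉ X → G.adjVia (fun _ => True) u v → v ∈ W) ∧
  (∀ u ∈ W, ∀ v ∈ W, G.Reaches (fun e => G.src e ∉ X ∧ G.tgt e ∉ X) u v)

/-- The subgraph induced on `W`, with only those of its edges satisfying `P` kept,
is connected. -/
def ConnectedOn (G : Multigraph V E) (W : Set V) (P : E → Prop) : Prop :=
  ∀ u ∈ W, ∀ v ∈ W, G.Reaches (fun e => P e ∧ G.src e ∈ W ∧ G.tgt e ∈ W) u v

/-- The subgraph induced on `W` is `k`-edge-connected. -/
def EdgeConnectedOn (G : Multigraph V E) (W : Set V) (k : ℕ) : Prop :=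
  ∀ S : Set E, S.ncard < k → G.ConnectedOn W fun e => e ∉ S

/-- Some cycle lies entirely inside the vertex set `X`. -/
def HasCycleIn (G : Multigraph V E) (X : Set V) : Prop :=
  ∃ C : Set E, G.IsCycle C ∧ ∀ e ∈ C, G.src e ∈ X ∧ G.tgt e ∈ X

/-- The edge cut `E(X, V \ X)`. -/
def cutEdges (G : Multigraph V E) (X : Set V) : Set E :=
  {e | (G.src e ∈ X ∧ G.tgt e ∉ X) ∨ (G.src e ∉ X ∧ G.tgt e ∈ X)}

/-- A cubic graph is cyclically `k`-edge-connected if every edge cut separating two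
cycle-containing parts has at least `k` edges. -/
def CyclicallyEdgeConnected (G : Multigraph V E) (k : ℕ) : Prop :=
  ∀ X : Set V, G.HasCycleIn X → G.HasCycleIn Xᶜ → k ≤ (G.cutEdges X).ncard

/-- `G` is 3-connected: more than 3 vertices, connected, and still connected after
deleting any two vertices. -/
def ThreeConnected [Fintype V] (G : Multigraph V E) : Prop :=
  3 < Fintype.card V ∧ G.Connected ∧
    ∀ u v : V, G.ConnectedOn {w : V | w ≠ u ∧ w ≠ v} fun _ => True

/-- The graph `G − r` obtained by deleting the vertex `r` and all incident edges. -/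
def deleteVertex (G : Multigraph V E) (r : V) :
    Multigraph {v : V // v ≠ r} {e : E // G.src e ≠ r ∧ G.tgt e ≠ r} where
  src e := ⟨G.src e.1, e.2.1⟩
  tgt e := ⟨G.tgt e.1, e.2.2⟩

end Multigraph

namespace Multigraph

variable {V E : Type}

theorem Reaches.mono {G : Multigraph V E} {P Q : E → Prop} {u v : V}
    (h : G.Reaches P u v) (hPQ : ∀ e, P e → Q e) : G.Reaches Q u v :=
  Relation.ReflTransGen.mono (r := G.adjVia P) (p := G.adjVia Q)
    (fun _ _ ⟨e, he, h⟩ => ⟨e, hPQ e he, h⟩) u v h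

theorem Reaches.symm {G : Multigraph V E} {P : E → Prop} {u v : V}
    (h : G.Reaches P u v) : G.Reaches P v u := by
  induction h with
  | refl => exact .refl
  | tail _ hbc ih =>
    obtain ⟨e, he, h⟩ := hbc
    exact .head ⟨e, he, h.symm⟩ ih

/-- A walk leaving `A` uses an edge of the cut of `A`. -/
theorem Reaches.exists_mem_cutEdges {G : Multigraph V E} {P : E → Prop} {A : Set V} {u v : V}
    (h : G.Reaches P u v) (hu : u ∈ A) (hv : v ∉ A) : ∃ e ∈ G.cutEdges A, P e := by
  induction h with
  | refl => exact absurd hu hv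
  | @tail b c _ hbc ih =>
    by_cases hb : b ∈ A
    · obtain ⟨e, he, ⟨rfl, rfl⟩ | ⟨rfl, rfl⟩⟩ := hbc
      · exact ⟨e, Or.inl ⟨hb, hv⟩, he⟩
      · exact ⟨e, Or.inr ⟨hv, hb⟩, he⟩
    · exact ih hb

theorem Reaches.mem_of_forall {G : Multigraph V E} {P : E → Prop} {A : Set V} {u v : V}
    (h : G.Reaches P u v) (hu : u ∈ A) (hA : ∀ e, P e → G.src e ∈ A ∧ G.tgt e ∈ A) :
    v ∈ A := by
  by_contra hv
  obtain ⟨e, he, hP⟩ := h.exists_mem_cutEdges hu hv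
  have := hA e hP
  rcases he with he | he <;> tauto

/-- A walk from outside `K` either avoids the cut of `K`, or its initial part up to the first
vertex in `K` uses a single edge of that cut. -/
theorem Reaches.avoids_or_enters {G : Multigraph V E} {P : E → Prop} {K : Set V} {a b : V}
    (h : G.Reaches P a b) (ha : a ∉ K) :
    (b ∉ K ∧ G.Reaches (fun e => P e ∧ e ∉ G.cutEdges K) a b) ∨
      ∃ d, ∃ k ∈ K, G.Reaches (fun e => P e ∧ (e ∈ G.cutEdges K → e = d)) a k := by
  induction h with
  | refl => exact Or.inl ⟨ha, .refl⟩
  | @tail b c _ hbc ih =>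
    rcases ih with ⟨hb, ih⟩ | ih
    · obtain ⟨e, he, hjoin⟩ := hbc
      by_cases hc : c ∈ K
      · refine Or.inr ⟨e, c, hc, ?_⟩
        exact .tail (ih.mono fun e' he' => ⟨he'.1, fun h => absurd h he'.2⟩)
          ⟨e, ⟨he, fun _ => rfl⟩, hjoin⟩
      · refine Or.inl ⟨hc, .tail ih ⟨e, ⟨he, ?_⟩, hjoin⟩⟩
        rcases hjoin with ⟨rfl, rfl⟩ | ⟨rfl, rfl⟩ <;> simp [cutEdges, hb, hc]
    · exact Or.inr ih

theorem EdgeConnected.le_ncard_cutEdges {G : Multigraph V E} {k : ℕ} (hG : G.EdgeConnected k)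
    {A : Set V} (hA : A.Nonempty) (hA' : A ≠ Set.univ) : k ≤ (G.cutEdges A).ncard := by
  by_contra! hlt
  obtain ⟨u, hu⟩ := hA
  obtain ⟨v, hv⟩ := (Set.ne_univ_iff_exists_notMem A).1 hA'
  obtain ⟨e, he, hnot⟩ := ((hG _ hlt).2 u v).exists_mem_cutEdges hu hv
  exact hnot he

/-- The edges of the subgraph induced on `W` that leave `A`. -/
def innerCut (G : Multigraph V E) (W A : Set V) : Set E :=
  {e ∈ G.cutEdges A | G.src e ∈ W ∧ G.tgt e ∈ W}

theorem ConnectedOn.exists_mem_innerCut {G : Multigraph V E} {W A : Set V} {P : E → Prop}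
    (h : G.ConnectedOn W P) (hAW : A ⊆ W) (hA : A.Nonempty) (hne : A ≠ W) :
    ∃ e ∈ G.innerCut W A, P e := by
  obtain ⟨u, hu⟩ := hA
  obtain ⟨v, hv, hvA⟩ := Set.exists_of_ssubset (hAW.ssubset_of_ne hne)
  obtain ⟨e, he, hP, hW⟩ := (h u (hAW hu) v hv).exists_mem_cutEdges hu hvA
  exact ⟨e, ⟨he, hW⟩, hP⟩

theorem connectedOn_of_forall_innerCut {G : Multigraph V E} {W : Set V} {P : E → Prop}
    (h : ∀ A ⊆ W, A.Nonempty → A ≠ W → ∃ e ∈ G.innerCut W A, P e) : G.ConnectedOn W P := by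
  intro u hu v hv
  by_contra hnot
  set R : Set V := {x | G.Reaches (fun e => P e ∧ G.src e ∈ W ∧ G.tgt e ∈ W) u x}
  have hRW : R ⊆ W := fun x hx => Reaches.mem_of_forall hx hu fun e he => he.2
  obtain ⟨e, ⟨he, hW⟩, hP⟩ := h R hRW ⟨u, .refl⟩ (fun h => hnot (h ▸ hv : v ∈ R))
  rcases he with ⟨h1, h2⟩ | ⟨h1, h2⟩
  · exact h2 (Relation.ReflTransGen.tail h1 ⟨e, ⟨hP, hW⟩, Or.inl ⟨rfl, rfl⟩⟩)
  · exact h1 (Relation.ReflTransGen.tail h2 ⟨e, ⟨hP, hW⟩, Or.inr ⟨rfl, rfl⟩⟩)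

theorem EdgeConnectedOn.le_ncard_innerCut {G : Multigraph V E} {W A : Set V} {k : ℕ}
    (h : G.EdgeConnectedOn W k) (hAW : A ⊆ W) (hA : A.Nonempty) (hne : A ≠ W) :
    k ≤ (G.innerCut W A).ncard := by
  by_contra! hlt
  obtain ⟨e, he, he'⟩ := (h _ hlt).exists_mem_innerCut hAW hA hne
  exact he' he

theorem innerCut_diff (G : Multigraph V E) (W A : Set V) :
    G.innerCut W (W \ A) = G.innerCut W A := by
  ext e
  simp only [innerCut, cutEdges, Set.mem_ofPred_eq, Set.mem_sdiff]
  tauto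

theorem Cubic.ncard_incident_le {G : Multigraph V E} (h : G.Cubic) (v : V) :
    {e | G.src e = v ∨ G.tgt e = v}.ncard ≤ 3 := by
  have := h v
  rw [degree] at this
  rw [← this, Set.ofPred_or]
  exact Set.ncard_union_le _ _

/-- In a cubic graph, a vertex of a nontrivial 2-edge-connected induced subgraph is incident with
at most one edge leaving that subgraph. -/
theorem EdgeConnectedOn.joins_unique [Fintype E] {G : Multigraph V E} {W : Set V}
    (h : G.EdgeConnectedOn W 2) (hcubic : G.Cubic) {v : V} (hv : v ∈ W) (hne : W ≠ {v})
    {e e' : E} (he : G.joins e v Wᶜ) (he' : G.joins e' v Wᶜ) : e = e' := by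
  by_contra hee
  have h2 := h.le_ncard_innerCut (Set.singleton_subset_iff.2 hv) (Set.singleton_nonempty v) hne.symm
  have hsub : G.innerCut W {v} ∪ {e, e'} ⊆ {e | G.src e = v ∨ G.tgt e = v} := by
    rintro d (⟨hd, -⟩ | rfl | rfl)
    · rcases hd with ⟨hd, -⟩ | ⟨-, hd⟩
      · exact Or.inl hd
      · exact Or.inr hd
    · exact he.imp And.left And.left
    · exact he'.imp And.left And.left
  have hdisj : Disjoint (G.innerCut W {v}) {e, e'} := by
    rw [Set.disjoint_left]
    rintro d ⟨-, hs, ht⟩ (rfl | rfl)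
    · rcases he with ⟨-, hd⟩ | ⟨-, hd⟩ <;> exact hd ‹_›
    · rcases he' with ⟨-, hd⟩ | ⟨-, hd⟩ <;> exact hd ‹_›
  have h3 := (Set.ncard_le_ncard hsub (Set.toFinite _)).trans (hcubic.ncard_incident_le v)
  rw [Set.ncard_union_eq hdisj (Set.toFinite _) (Set.toFinite _), Set.ncard_pair hee] at h3
  omega

/-- If `a` reaches some vertex of `T` other than itself, then some path from `a` ends at the first
vertex of `T` it meets. -/
theorem Reaches.exists_isPath {G : Multigraph V E} {R : E → Prop} {T : Set V} {a t : V}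
    (h : G.Reaches R a t) (ht : t ∈ T) (hta : t ≠ a) :
    ∃ (n : ℕ) (vs : Fin (n + 1) → V) (es : Fin n → E),
      vs 0 = a ∧ G.IsPath vs es ∧ (∀ i, R (es i)) ∧
      vs (Fin.last n) ∈ T ∧ vs (Fin.last n) ≠ a ∧
      ∀ i : Fin (n + 1), i ≠ 0 → i ≠ Fin.last n → vs i ∉ T := by
  let S : SimpleGraph V :=
    { Adj := fun u v => u ≠ v ∧ G.adjVia R u v
      symm := ⟨fun u v ⟨hne, e, he, h⟩ => ⟨hne.symm, e, he, h.symm⟩⟩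
      loopless := ⟨fun u hu => hu.1 rfl⟩ }
  have hreach : S.Reachable a t := by
    clear hta ht
    induction h with
    | refl => exact .refl _
    | @tail b c _ hbc ih =>
      by_cases hbc' : b = c
      · exact hbc' ▸ ih
      · exact ih.trans (SimpleGraph.Adj.reachable (G := S) ⟨hbc', hbc⟩)
  have hex : ∃ n, ∃ (v : V) (p : S.Walk a v), (v ∈ T ∧ v ≠ a) ∧ p.length = n :=
    ⟨_, t, hreach.some, ⟨ht, hta⟩, rfl⟩
  obtain ⟨v, p₀, ⟨hvT, hva⟩, hlen₀⟩ := Nat.find_spec hex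
  have hmin : ∀ (v' : V) (q : S.Walk a v'), v' ∈ T → v' ≠ a → p₀.length ≤ q.length :=
    fun v' q h1 h2 => hlen₀ ▸ Nat.find_min' hex ⟨v', q, ⟨h1, h2⟩, rfl⟩
  obtain ⟨p, hp, hplen⟩ : ∃ p : S.Walk a v, p.IsPath ∧ p.length ≤ p₀.length :=
    ⟨p₀.bypass, p₀.bypass_isPath, p₀.length_bypass_le_length⟩
  have hinj : ∀ i j : ℕ, i ≤ p.length → j ≤ p.length → p.getVert i = p.getVert j → i = j :=
    fun i j hi hj hij => hp.getVert_injOn hi hj hij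
  have hadj : ∀ i : Fin p.length, G.adjVia R (p.getVert i) (p.getVert (i + 1)) :=
    fun i => (p.adj_getVert_succ i.2).2
  choose es hR hjoin using hadj
  refine ⟨p.length, fun i => p.getVert i, es, p.getVert_zero, ⟨?_, ?_, ?_⟩, hR, ?_, ?_, ?_⟩
  · intro i j hij
    exact Fin.ext (hinj i j (by omega) (by omega) hij)
  · intro i j hij
    have hi := hjoin i
    have hj := hjoin j
    rw [hij] at hi
    have key : (p.getVert i = p.getVert j) ∨
        (p.getVert i = p.getVert (j + 1) ∧ p.getVert (i + 1) = p.getVert j) := by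
      rcases hi with ⟨h1, h2⟩ | ⟨h1, h2⟩ <;> rcases hj with ⟨h3, h4⟩ | ⟨h3, h4⟩
      · exact Or.inl (h1.symm.trans h3)
      · exact Or.inr ⟨h1.symm.trans h3, h2.symm.trans h4⟩
      · exact Or.inr ⟨h2.symm.trans h4, h1.symm.trans h3⟩
      · exact Or.inl (h2.symm.trans h4)
    rcases key with h | ⟨h1, h2⟩
    · exact Fin.ext (hinj i j (by omega) (by omega) h)
    · have := hinj i (j + 1) (by omega) (by omega) h1
      have := hinj (i + 1) j (by omega) (by omega) h2
      omega
  · intro i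
    simpa using hjoin i
  · simpa using hvT
  · simpa using hva
  · intro i hi0 hil hiT
    have hi0' : (i : ℕ) ≠ 0 := fun h => hi0 (Fin.ext h)
    have hil' : (i : ℕ) ≠ p.length := fun h => hil (Fin.ext h)
    have hia : p.getVert i ≠ a := fun h =>
      hi0' (hinj i 0 (by omega) (by omega) (h.trans p.getVert_zero.symm))
    have := hmin _ (p.take i) hiT hia
    rw [SimpleGraph.Walk.take_length] at this
    omega

/-- `vs`, `es` is a path in the subgraph induced on `W`, peripheral there, whose ends are incident
with distinct edges to `X` other than `f`, and with no internal vertex having a neighbour in `X`. -/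
def IsPeripheralPath (G : Multigraph V E) (X W : Set V) (f : E) {n : ℕ}
    (vs : Fin (n + 1) → V) (es : Fin n → E) : Prop :=
  G.IsPath vs es ∧ (∀ i, vs i ∈ W) ∧
  G.ConnectedOn W (fun e => e ∉ Set.range es) ∧
  (∃ e₀ e₁ : E, e₀ ≠ e₁ ∧ e₀ ≠ f ∧ e₁ ≠ f ∧
    G.joins e₀ (vs 0) X ∧ G.joins e₁ (vs (Fin.last n)) X) ∧
  (∀ i : Fin (n + 1), i ≠ 0 → i ≠ Fin.last n → ∀ e : E, ¬ G.joins e (vs i) X)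

theorem exists_joins_of_mem_cutEdges {G : Multigraph V E} {W : Set V} {e : E}
    (he : e ∈ G.cutEdges W) : ∃ v ∈ W, G.joins e v Wᶜ := by
  rcases he with ⟨h1, h2⟩ | ⟨h1, h2⟩
  · exact ⟨_, h1, Or.inl ⟨rfl, h2⟩⟩
  · exact ⟨_, h2, Or.inr ⟨rfl, h1⟩⟩

theorem mem_cutEdges_of_joins {G : Multigraph V E} {W : Set V} {e : E} {v : V} (hv : v ∈ W)
    (he : G.joins e v Wᶜ) : e ∈ G.cutEdges W := by
  rcases he with ⟨rfl, h2⟩ | ⟨rfl, h2⟩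
  · exact Or.inl ⟨hv, h2⟩
  · exact Or.inr ⟨h2, hv⟩

theorem eq_of_joins_compl {G : Multigraph V E} {W : Set V} {e : E} {u v : V} (hu : u ∈ W)
    (hv : v ∈ W) (heu : G.joins e u Wᶜ) (hev : G.joins e v Wᶜ) : u = v := by
  rcases heu with ⟨rfl, h2⟩ | ⟨rfl, h2⟩ <;> rcases hev with ⟨h3, h4⟩ | ⟨h3, h4⟩
  · exact h3
  · exact absurd (h3 ▸ hv) h2
  · exact absurd (h3 ▸ hv) h2
  · exact h3

/-- An edge leaving `A ⊆ W` either stays in `W` or leaves `W` at a vertex of `A`. -/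
theorem mem_innerCut_or_joins {G : Multigraph V E} {W A : Set V} (hAW : A ⊆ W) {e : E}
    (he : e ∈ G.cutEdges A) : e ∈ G.innerCut W A ∨ ∃ v ∈ A, G.joins e v Wᶜ := by
  by_cases h : G.src e ∈ W ∧ G.tgt e ∈ W
  · exact Or.inl ⟨he, h⟩
  · refine Or.inr ?_
    rcases he with ⟨h1, h2⟩ | ⟨h1, h2⟩
    · exact ⟨_, h1, Or.inl ⟨rfl, fun h3 => h ⟨hAW h1, h3⟩⟩⟩
    · exact ⟨_, h2, Or.inr ⟨rfl, fun h3 => h ⟨h3, hAW h2⟩⟩⟩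

/-- Deleting the end `w` of an edge `f` leaving `W` does not separate `y₀` from all other
vertices with an edge leaving `W`. -/
theorem exists_reaches_avoiding_vertex [Fintype E] {G : Multigraph V E}
    (hG : G.EdgeConnected 3) (hcubic : G.Cubic) {W : Set V} (hW : W ≠ Set.univ)
    (hconn : G.EdgeConnectedOn W 2) {f e₀ : E} {w y₀ : V} (hw : w ∈ W) (hf : G.joins f w Wᶜ)
    (hy₀ : y₀ ∈ W) (he₀ : G.joins e₀ y₀ Wᶜ) (hyw : y₀ ≠ w) :
    ∃ t, (∃ e, G.joins e t Wᶜ) ∧ t ≠ y₀ ∧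
      G.Reaches (fun e => G.src e ∈ W \ {w} ∧ G.tgt e ∈ W \ {w}) y₀ t := by
  by_contra! hnone
  set K : Set V := {v | G.Reaches (fun e => G.src e ∈ W \ {w} ∧ G.tgt e ∈ W \ {w}) y₀ v}
  have hKW : K ⊆ W \ {w} := fun v hv => Reaches.mem_of_forall hv ⟨hy₀, hyw⟩ fun e he => he
  have hKW' : K ⊆ W := fun v hv => (hKW hv).1
  have hwK : w ∉ K := fun h => (hKW h).2 rfl
  have hyK : y₀ ∈ K := .refl
  have hstep : ∀ e, (G.src e ∈ W \ {w} ∧ G.tgt e ∈ W \ {w}) → e ∉ G.cutEdges K := by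
    rintro e he (⟨h1, h2⟩ | ⟨h1, h2⟩)
    · exact h2 (Relation.ReflTransGen.tail h1 ⟨e, he, Or.inl ⟨rfl, rfl⟩⟩)
    · exact h1 (Relation.ReflTransGen.tail h2 ⟨e, he, Or.inr ⟨rfl, rfl⟩⟩)
  have hnontriv : ∀ v, W ≠ {v} := by
    rintro v rfl
    exact hyw (hy₀.trans hw.symm)
  have hinner : G.innerCut W K ⊆ {e | G.src e = w ∨ G.tgt e = w} := by
    rintro e ⟨he, hs, ht⟩
    by_contra hne
    rw [Set.mem_ofPred_eq, not_or] at hne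
    exact hstep e ⟨⟨hs, hne.1⟩, ⟨ht, hne.2⟩⟩ he
  have h2 := hconn.le_ncard_innerCut hKW' ⟨y₀, hyK⟩ (fun h => hwK (h ▸ hw))
  have hinsW : insert w K ⊆ W := Set.insert_subset hw hKW'
  have h3 : 3 ≤ (G.cutEdges (insert w K)).ncard :=
    hG.le_ncard_cutEdges ⟨w, Set.mem_insert _ _⟩
      (fun h => hW (Set.univ_subset_iff.1 (h ▸ hinsW)))
  obtain ⟨d, hd, hd'⟩ : ∃ d ∈ G.cutEdges (insert w K), d ∉ ({e₀, f} : Set E) := by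
    refine Set.exists_mem_notMem_of_ncard_lt_ncard ?_ (Set.toFinite _)
    have := Set.ncard_insert_le e₀ {f}
    rw [Set.ncard_singleton] at this
    omega
  simp only [Set.mem_insert_iff, Set.mem_singleton_iff, not_or] at hd'
  have hdin : d ∈ G.innerCut W (insert w K) := by
    refine (mem_innerCut_or_joins hinsW hd).resolve_right ?_
    rintro ⟨v, rfl | hv, hdv⟩
    · exact hd'.2 (hconn.joins_unique hcubic hw (hnontriv _) hdv hf)
    · obtain rfl : v = y₀ := by
        by_contra hvy
        exact hnone v ⟨d, hdv⟩ hvy hv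
      exact hd'.1 (hconn.joins_unique hcubic hy₀ (hnontriv _) hdv he₀)
  have hdw : G.src d = w ∨ G.tgt d = w := by
    by_contra! hne
    refine hstep d ⟨⟨hdin.2.1, hne.1⟩, ⟨hdin.2.2, hne.2⟩⟩ ?_
    simpa [cutEdges, hne.1, hne.2] using hd
  have hdK : d ∉ G.innerCut W K := by
    rintro ⟨hdK, -⟩
    rcases hdw with h | h <;> simp_all [cutEdges]
  have hfK : f ∉ G.innerCut W K := by
    rintro ⟨-, hs, ht⟩
    rcases hf with ⟨-, h⟩ | ⟨-, h⟩ <;> exact h ‹_›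
  have hsub : insert d (insert f (G.innerCut W K)) ⊆ {e | G.src e = w ∨ G.tgt e = w} :=
    Set.insert_subset hdw (Set.insert_subset (hf.imp And.left And.left) hinner)
  have h4 := (Set.ncard_le_ncard hsub (Set.toFinite _)).trans (hcubic.ncard_incident_le w)
  rw [Set.ncard_insert_of_notMem (by simp [hd'.2, hdK]) (Set.toFinite _),
    Set.ncard_insert_of_notMem hfK (Set.toFinite _)] at h4
  omega

/-- Let `K` be a connected set of vertices, all of whose inner edges satisfy `R`. A walk from `y₀`
to another vertex with an edge leaving `W` can be rerouted so as to miss an edge leaving `K`. -/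
theorem exists_reaches_avoiding_innerCut_edge [Fintype E] {G : Multigraph V E}
    (hG : G.EdgeConnected 3) {W K : Set V} (hW : W ≠ Set.univ)
    (hconn : G.EdgeConnectedOn W 2) (hKW : K ⊆ W) (hKne : K.Nonempty) (hKW' : K ≠ W)
    {R : E → Prop}
    (hK : ∀ u ∈ K, ∀ v ∈ K, G.Reaches (fun e => R e ∧ e ∉ G.cutEdges K) u v)
    {y₀ t : V} (ht : ∃ e, G.joins e t Wᶜ) (hty : t ≠ y₀) (hreach : G.Reaches R y₀ t) :
    ∃ d ∈ G.innerCut W K, ∃ t', (∃ e, G.joins e t' Wᶜ) ∧ t' ≠ y₀ ∧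
      G.Reaches (fun e => R e ∧ e ≠ d) y₀ t' := by
  have h2 := hconn.le_ncard_innerCut hKW hKne hKW'
  have main : ∀ (D : Set E) (t' : V), D.ncard < (G.innerCut W K).ncard →
      (∃ e, G.joins e t' Wᶜ) → t' ≠ y₀ →
      G.Reaches (fun e => R e ∧ (e ∈ G.cutEdges K → e ∈ D)) y₀ t' →
      ∃ d ∈ G.innerCut W K, ∃ t', (∃ e, G.joins e t' Wᶜ) ∧ t' ≠ y₀ ∧
        G.Reaches (fun e => R e ∧ e ≠ d) y₀ t' := by
    intro D t' hD ht' hty' h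
    obtain ⟨d, hd, hdD⟩ := Set.exists_mem_notMem_of_ncard_lt_ncard hD (Set.toFinite _)
    refine ⟨d, hd, t', ht', hty', h.mono ?_⟩
    rintro e ⟨he, heD⟩
    refine ⟨he, ?_⟩
    rintro rfl
    exact hdD (heD hd.1)
  have inK : ∀ (D : Set E), ∀ u ∈ K, ∀ v ∈ K,
      G.Reaches (fun e => R e ∧ (e ∈ G.cutEdges K → e ∈ D)) u v :=
    fun D u hu v hv => (hK u hu v hv).mono fun e he => ⟨he.1, fun h => absurd h he.2⟩
  have avoid : G.Reaches (fun e => R e ∧ e ∉ G.cutEdges K) y₀ t →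
      ∃ d ∈ G.innerCut W K, ∃ t', (∃ e, G.joins e t' Wᶜ) ∧ t' ≠ y₀ ∧
        G.Reaches (fun e => R e ∧ e ≠ d) y₀ t' := fun h =>
    main ∅ t (by rw [Set.ncard_empty]; omega) ht hty
      (h.mono fun e he => ⟨he.1, fun h => absurd h he.2⟩)
  by_cases hT : ∃ s ∈ K, s ≠ y₀ ∧ ∃ e, G.joins e s Wᶜ
  · obtain ⟨s, hsK, hsy, hs⟩ := hT
    by_cases hyK : y₀ ∈ K
    · exact main ∅ s (by rw [Set.ncard_empty]; omega) hs hsy (inK _ _ hyK _ hsK)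
    · rcases hreach.avoids_or_enters hyK with ⟨-, h⟩ | ⟨d, k, hk, h⟩
      · exact avoid h
      · exact main {d} s (by rw [Set.ncard_singleton]; omega) hs hsy
          (Relation.ReflTransGen.trans h (inK _ _ hk _ hsK))
  · have htK : t ∉ K := fun h => hT ⟨t, h, hty, ht⟩
    rcases hreach.symm.avoids_or_enters htK with ⟨-, h⟩ | ⟨d, k, hk, h⟩
    · exact avoid h.symm
    by_cases hyK : y₀ ∈ K
    · exact main {d} t (by rw [Set.ncard_singleton]; omega) ht hty
        (Relation.ReflTransGen.trans (inK _ _ hyK _ hk) h.symm)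
    · rcases hreach.avoids_or_enters hyK with ⟨-, h'⟩ | ⟨d', k', hk', h'⟩
      · exact avoid h'
      have hcut : G.cutEdges K ⊆ G.innerCut W K := by
        intro e he
        refine (mem_innerCut_or_joins hKW he).resolve_right ?_
        rintro ⟨v, hv, hev⟩
        exact hT ⟨v, hv, fun h => hyK (h ▸ hv), e, hev⟩
      have h3 := (hG.le_ncard_cutEdges hKne
        (fun h => hW (Set.univ_subset_iff.1 (h ▸ hKW)))).trans
        (Set.ncard_le_ncard hcut (Set.toFinite _))
      have h4 : ({d', d} : Set E).ncard ≤ 2 := by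
        simpa using Set.ncard_insert_le d' {d}
      refine main {d', d} t (by omega) ht hty ?_
      refine Relation.ReflTransGen.trans (h'.mono fun e he => ⟨he.1, fun hc => ?_⟩)
        (Relation.ReflTransGen.trans (inK _ _ hk' _ hk)
          (h.symm.mono fun e he => ⟨he.1, fun hc => ?_⟩))
      · exact Or.inl (he.2 hc)
      · exact Or.inr (he.2 hc)

/-- There is a connected spanning edge set of the induced subgraph on `W` whose removal still
leaves a walk from `y₀`, avoiding `w`, to another vertex with an edge leaving `W`. -/
theorem exists_connecting_edgeSet [Fintype V] [Fintype E] {G : Multigraph V E}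
    (hG : G.EdgeConnected 3) (hcubic : G.Cubic) {W : Set V} (hW : W ≠ Set.univ)
    (hconn : G.EdgeConnectedOn W 2) {f e₀ : E} {w y₀ : V} (hw : w ∈ W) (hf : G.joins f w Wᶜ)
    (hy₀ : y₀ ∈ W) (he₀ : G.joins e₀ y₀ Wᶜ) (hyw : y₀ ≠ w) :
    ∃ F : Set E, G.ConnectedOn W (· ∈ F) ∧ ∃ t, (∃ e, G.joins e t Wᶜ) ∧ t ≠ y₀ ∧
      G.Reaches (fun e => e ∉ F ∧ G.src e ∈ W \ {w} ∧ G.tgt e ∈ W \ {w}) y₀ t := by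
  let good : Set (Set V × Set E) := {p | p.1 ⊆ W ∧ w ∈ p.1 ∧
    (∀ e ∈ p.2, G.src e ∈ p.1 ∧ G.tgt e ∈ p.1) ∧ (∀ v ∈ p.1, G.Reaches (· ∈ p.2) w v) ∧
    ∃ t, (∃ e, G.joins e t Wᶜ) ∧ t ≠ y₀ ∧
      G.Reaches (fun e => e ∉ p.2 ∧ G.src e ∈ W \ {w} ∧ G.tgt e ∈ W \ {w}) y₀ t}
  have hgood : good.Nonempty := by
    obtain ⟨t, ht, hty, h⟩ :=
      exists_reaches_avoiding_vertex hG hcubic hW hconn hw hf hy₀ he₀ hyw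
    refine ⟨({w}, ∅), Set.singleton_subset_iff.2 hw, rfl, fun e he => absurd he (by simp), ?_,
      t, ht, hty, h.mono fun e he => ⟨by simp, he⟩⟩
    rintro v rfl
    exact .refl
  obtain ⟨⟨B, F⟩, ⟨hBW, hwB, hFB, hB, t, ht, hty, hreach⟩, hmax⟩ :=
    Set.exists_max_image good (fun p => p.1.ncard) (Set.toFinite _) hgood
  dsimp only at hBW hwB hFB hB hreach hmax
  suffices hBeq : B = W by
    subst hBeq
    refine ⟨F, fun u hu v hv => ?_, t, ht, hty, hreach⟩
    exact Reaches.mono (Relation.ReflTransGen.trans (hB u hu).symm (hB v hv))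
      fun e he => ⟨he, hFB e he⟩
  by_contra hne
  obtain ⟨u, huW, huB⟩ := Set.exists_of_ssubset (hBW.ssubset_of_ne hne)
  set K : Set V := {v | G.Reaches (fun e => G.src e ∈ W \ B ∧ G.tgt e ∈ W \ B) u v}
  have hKWB : K ⊆ W \ B := fun v hv => Reaches.mem_of_forall hv ⟨huW, huB⟩ fun e he => he
  have hstep : ∀ e, (G.src e ∈ W \ B ∧ G.tgt e ∈ W \ B) → e ∉ G.cutEdges K := by
    rintro e he (⟨h1, h2⟩ | ⟨h1, h2⟩)
    · exact h2 (Relation.ReflTransGen.tail h1 ⟨e, he, Or.inl ⟨rfl, rfl⟩⟩)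
    · exact h1 (Relation.ReflTransGen.tail h2 ⟨e, he, Or.inr ⟨rfl, rfl⟩⟩)
  have hKconn : ∀ a ∈ K, ∀ b ∈ K, G.Reaches (fun e => (e ∉ F ∧ G.src e ∈ W \ {w} ∧
      G.tgt e ∈ W \ {w}) ∧ e ∉ G.cutEdges K) a b := by
    intro a ha b hb
    refine Reaches.mono (Relation.ReflTransGen.trans (Reaches.symm ha) hb) fun e he => ?_
    refine ⟨⟨fun heF => he.1.2 (hFB e heF).1, ⟨he.1.1, ?_⟩, ⟨he.2.1, ?_⟩⟩, hstep e he⟩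
    · exact fun h => he.1.2 ((h : G.src e = w) ▸ hwB)
    · exact fun h => he.2.2 ((h : G.tgt e = w) ▸ hwB)
  obtain ⟨d, ⟨hdK, hds, hdt⟩, t', ht', hty', hreach'⟩ :=
    exists_reaches_avoiding_innerCut_edge hG hW hconn (fun v hv => (hKWB hv).1) ⟨u, .refl⟩
      (fun h => (hKWB (h ▸ hw)).2 hwB) hKconn ht hty hreach
  obtain ⟨b, z, hb, hz, hzB, hdbz⟩ : ∃ b z, b ∈ B ∧ z ∈ W ∧ z ∉ B ∧
      ((G.src d = b ∧ G.tgt d = z) ∨ (G.src d = z ∧ G.tgt d = b)) := by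
    have hout : ¬(G.src d ∈ W \ B ∧ G.tgt d ∈ W \ B) := fun h => hstep d h hdK
    rcases hdK with ⟨h1, h2⟩ | ⟨h1, h2⟩
    · refine ⟨_, _, ?_, hds, (hKWB h1).2, Or.inr ⟨rfl, rfl⟩⟩
      by_contra h
      exact hout ⟨hKWB h1, hdt, h⟩
    · refine ⟨_, _, ?_, hdt, (hKWB h2).2, Or.inl ⟨rfl, rfl⟩⟩
      by_contra h
      exact hout ⟨⟨hds, h⟩, hKWB h2⟩
  have hbigger := hmax (insert z B, insert d F) ⟨Set.insert_subset hz hBW,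
    Set.mem_insert_of_mem _ hwB, ?_, ?_, t', ht', hty', hreach'.mono fun e he => ?_⟩
  · dsimp only at hbigger
    rw [Set.ncard_insert_of_notMem hzB (Set.toFinite _)] at hbigger
    omega
  · rintro e (rfl | he)
    · rcases hdbz with ⟨rfl, rfl⟩ | ⟨rfl, rfl⟩ <;> simp [hb]
    · exact ⟨Or.inr (hFB e he).1, Or.inr (hFB e he).2⟩
  · have hB' : ∀ v ∈ B, G.Reaches (· ∈ insert d F) w v := fun v hv =>
      (hB v hv).mono fun e he => Or.inr he
    rintro v (rfl | hv)
    · exact Relation.ReflTransGen.tail (hB' b hb) ⟨d, Or.inl rfl, hdbz⟩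
    · exact hB' v hv
  · refine ⟨?_, he.1.2⟩
    rintro (rfl | h)
    · exact he.2 rfl
    · exact he.1.1 h

/-- The case of a 2-edge-connected induced subgraph with a prescribed end `y₀`. -/
theorem EdgeConnectedOn.exists_isPeripheralPath [Fintype V] [Fintype E] {G : Multigraph V E}
    (hG : G.EdgeConnected 3) (hcubic : G.Cubic) {W : Set V} (hW : W ≠ Set.univ)
    (hconn : G.EdgeConnectedOn W 2) {f : E} (hf : f ∈ G.cutEdges W) {y₀ : V} (hy₀ : y₀ ∈ W)
    (he₀ : ∃ e, e ≠ f ∧ G.joins e y₀ Wᶜ) :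
    ∃ (n : ℕ) (vs : Fin (n + 1) → V) (es : Fin n → E),
      vs 0 = y₀ ∧ G.IsPeripheralPath Wᶜ W f vs es := by
  obtain ⟨e₀, he₀f, he₀⟩ := he₀
  obtain ⟨w, hw, hfw⟩ := exists_joins_of_mem_cutEdges hf
  by_cases hsing : W = {y₀}
  · obtain ⟨e₁, he₁, he₁'⟩ : ∃ e₁ ∈ G.cutEdges W, e₁ ∉ ({e₀, f} : Set E) := by
      refine Set.exists_mem_notMem_of_ncard_lt_ncard ?_ (Set.toFinite _)
      have h3 := hG.le_ncard_cutEdges ⟨y₀, hy₀⟩ hW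
      rw [Set.ncard_pair he₀f]
      omega
    simp only [Set.mem_insert_iff, Set.mem_singleton_iff, not_or] at he₁'
    obtain ⟨v, hv, he₁v⟩ := exists_joins_of_mem_cutEdges he₁
    obtain rfl : v = y₀ := by
      rw [hsing] at hv
      exact hv
    refine ⟨0, fun _ => v, Fin.elim0, rfl, ⟨fun i j _ => Fin.ext (by omega),
      fun i => i.elim0, fun i => i.elim0⟩, fun _ => hv, ?_,
      ⟨e₀, e₁, Ne.symm he₁'.1, he₀f, he₁'.2, he₀, he₁v⟩,
      fun i hi => absurd (Fin.ext (by simp)) hi⟩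
    intro a ha b hb
    rw [hsing] at ha hb
    obtain rfl : a = v := ha
    obtain rfl : b = a := hb
    exact .refl
  have hyw : y₀ ≠ w := by
    rintro rfl
    exact he₀f (hconn.joins_unique hcubic hy₀ hsing he₀ hfw)
  obtain ⟨F, hF, t, ht, hty, hreach⟩ :=
    exists_connecting_edgeSet hG hcubic hW hconn hw hfw hy₀ he₀ hyw
  obtain ⟨n, vs, es, hvs0, hpath, hes, ⟨e₁, he₁⟩, hlast, hint⟩ :=
    hreach.exists_isPath (T := {v | ∃ e, G.joins e v Wᶜ}) ht hty
  have hmem : ∀ i, vs i ∈ W \ {w} := by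
    intro i
    refine Fin.cases ?_ (fun j => ?_) i
    · exact hvs0 ▸ ⟨hy₀, hyw⟩
    · rcases hpath.2.2 j with ⟨-, h⟩ | ⟨h, -⟩
      · exact h ▸ (hes j).2.2
      · exact h ▸ (hes j).2.1
  refine ⟨n, vs, es, hvs0, hpath, fun i => (hmem i).1, fun u hu v hv => ?_,
    ⟨e₀, e₁, ?_, he₀f, ?_, hvs0 ▸ he₀, he₁⟩, fun i h0 hl e he => hint i h0 hl ⟨e, he⟩⟩
  · refine (hF u hu v hv).mono fun e he => ⟨?_, he.2⟩
    rintro ⟨i, rfl⟩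
    exact (hes i).1 he.1
  · rintro rfl
    exact hlast (eq_of_joins_compl (hmem _).1 hy₀ he₁ he₀)
  · rintro rfl
    exact (hmem _).2 (eq_of_joins_compl (hmem _).1 hw he₁ hfw)

/-- In a connected induced subgraph on `W`, either the whole subgraph is 2-edge-connected, or
some part avoiding `w` is 2-edge-connected and attached by a single edge. -/
theorem ConnectedOn.edgeConnectedOn_two_or_exists [Fintype V] [Fintype E] {G : Multigraph V E}
    {W : Set V} {w : V} (hw : w ∈ W) (hconn : G.ConnectedOn W fun _ => True) :
    G.EdgeConnectedOn W 2 ∨ ∃ K ⊆ W, K.Nonempty ∧ w ∉ K ∧ G.EdgeConnectedOn K 2 ∧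
      ∃ b, G.innerCut W K = {b} := by
  let small : Set (Set V) := {K | K ⊆ W ∧ K.Nonempty ∧ w ∉ K ∧ (G.innerCut W K).ncard < 2}
  by_cases hsmall : small.Nonempty
  · right
    obtain ⟨K, ⟨hKW, hKne, hwK, hK⟩, hmin⟩ :=
      Set.exists_min_image small Set.ncard (Set.toFinite _) hsmall
    have hKW' : K ≠ W := fun h => hwK (h ▸ hw)
    obtain ⟨b, hb, -⟩ := hconn.exists_mem_innerCut hKW hKne hKW'
    have hbeq : G.innerCut W K = {b} :=
      (Set.eq_of_subset_of_ncard_le (Set.singleton_subset_iff.2 hb)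
        (by rw [Set.ncard_singleton]; omega) (Set.toFinite _)).symm
    refine ⟨K, hKW, hKne, hwK, fun S hS => connectedOn_of_forall_innerCut ?_, b, hbeq⟩
    intro A hAK hA hAne
    by_contra! hnone
    have hAS : G.innerCut K A ⊆ S := hnone
    have hcard := (Set.ncard_le_ncard hAS (Set.toFinite _)).trans_lt hS
    have part : ∀ A' ⊆ K, A'.Nonempty → A' ≠ K → G.innerCut K A' = G.innerCut K A →
        b ∉ G.cutEdges A' → False := by
      intro A' hA'K hA' hA'ne hcut hbA'
      have hsub : G.innerCut W A' ⊆ G.innerCut K A' := by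
        rintro e ⟨he, hW⟩
        refine ⟨he, ?_⟩
        by_contra hnot
        have : e ∈ G.innerCut W K := by
          refine ⟨?_, hW⟩
          rcases he with ⟨h1, h2⟩ | ⟨h1, h2⟩
          · exact Or.inl ⟨hA'K h1, fun h => hnot ⟨hA'K h1, h⟩⟩
          · exact Or.inr ⟨fun h => hnot ⟨h, hA'K h2⟩, hA'K h2⟩
        rw [hbeq] at this
        exact hbA' ((this : e = b) ▸ he)
      have hle := hmin A' ⟨hA'K.trans hKW, hA', fun h => hwK (hA'K h), by
        have := Set.ncard_le_ncard hsub (Set.toFinite _)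
        rw [hcut] at this
        omega⟩
      exact hA'ne (Set.eq_of_subset_of_ncard_le hA'K hle (Set.toFinite _))
    obtain ⟨v, hvK, hvA⟩ := Set.exists_of_ssubset (hAK.ssubset_of_ne hAne)
    by_cases hbA : b ∈ G.cutEdges A
    · refine part (K \ A) Set.sdiff_subset ⟨v, hvK, hvA⟩ ?_ (innerCut_diff _ _ _) ?_
      · intro h
        obtain ⟨a, ha⟩ := hA
        exact (h.ge (hAK ha)).2 ha
      · have hbK := hb.1
        have h1 := @hAK (G.src b)
        have h2 := @hAK (G.tgt b)
        simp only [cutEdges, Set.mem_ofPred_eq, Set.mem_sdiff] at hbA hbK ⊢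
        tauto
    · exact part A hAK hA hAne rfl hbA
  · left
    refine fun S hS => connectedOn_of_forall_innerCut fun A hAW hA hAne => ?_
    by_contra! hnone
    have hAS : G.innerCut W A ⊆ S := hnone
    have hcard := (Set.ncard_le_ncard hAS (Set.toFinite _)).trans_lt hS
    by_cases hwA : w ∈ A
    · obtain ⟨v, hvW, hvA⟩ := Set.exists_of_ssubset (hAW.ssubset_of_ne hAne)
      exact hsmall ⟨W \ A, Set.sdiff_subset, ⟨v, hvW, hvA⟩, fun h => h.2 hwA,
        by rwa [innerCut_diff]⟩
    · exact hsmall ⟨A, hAW, hA, hwA, hcard⟩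

theorem exists_isPeripheralPath [Fintype V] [Fintype E] {G : Multigraph V E}
    (hG : G.EdgeConnected 3) (hcubic : G.Cubic) {W : Set V} (hW : W ≠ Set.univ)
    (hconn : G.ConnectedOn W fun _ => True) {f : E} (hf : f ∈ G.cutEdges W) :
    ∃ (n : ℕ) (vs : Fin (n + 1) → V) (es : Fin n → E), G.IsPeripheralPath Wᶜ W f vs es := by
  have start : ∀ (K : Set V) (b : E), K.Nonempty → K ≠ Set.univ →
      ∃ y ∈ K, ∃ e, e ≠ b ∧ G.joins e y Kᶜ := by
    intro K b hK hK'
    have h3 := hG.le_ncard_cutEdges hK hK'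
    obtain ⟨e, he, heb⟩ : ∃ e ∈ G.cutEdges K, e ∉ ({b} : Set E) :=
      Set.exists_mem_notMem_of_ncard_lt_ncard (by rw [Set.ncard_singleton]; omega)
        (Set.toFinite _)
    obtain ⟨y, hy, hey⟩ := exists_joins_of_mem_cutEdges he
    exact ⟨y, hy, e, heb, hey⟩
  obtain ⟨w, hw, hfw⟩ := exists_joins_of_mem_cutEdges hf
  rcases hconn.edgeConnectedOn_two_or_exists hw with h2 | ⟨K, hKW, hKne, hwK, hK2, b, hb⟩
  · obtain ⟨y, hy, hey⟩ := start W f ⟨w, hw⟩ hW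
    obtain ⟨n, vs, es, -, h⟩ := h2.exists_isPeripheralPath hG hcubic hW hf hy hey
    exact ⟨n, vs, es, h⟩
  have hKuniv : K ≠ Set.univ := fun h => hwK (h ▸ Set.mem_univ w)
  have hbK : b ∈ G.innerCut W K := hb ▸ rfl
  obtain ⟨y, hy, hey⟩ := start K b hKne hKuniv
  obtain ⟨n, vs, es, -, hpath, hmem, hper, ⟨e₀, e₁, hne, he₀b, he₁b, he₀, he₁⟩, hint⟩ :=
    hK2.exists_isPeripheralPath hG hcubic hKuniv hbK.1 hy hey
  have toW : ∀ e, ∀ v ∈ K, e ≠ b → G.joins e v Kᶜ → G.joins e v Wᶜ := by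
    intro e v hv hne he
    have hnot : e ∉ G.innerCut W K := fun h => hne (by rwa [hb] at h)
    obtain ⟨u, hu, heu⟩ := (mem_innerCut_or_joins hKW (mem_cutEdges_of_joins hv he)).resolve_left
      hnot
    have heu' : G.joins e u Kᶜ := heu.imp (And.imp_right fun h h' => h (hKW h'))
      (And.imp_right fun h h' => h (hKW h'))
    exact eq_of_joins_compl hu hv heu' he ▸ heu
  have nef : ∀ e, ∀ v ∈ K, G.joins e v Wᶜ → e ≠ f := by
    rintro e v hv he rfl
    exact hwK (eq_of_joins_compl hw (hKW hv) hfw he ▸ hv)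
  have he₀' := toW e₀ _ (hmem _) he₀b he₀
  have he₁' := toW e₁ _ (hmem _) he₁b he₁
  refine ⟨n, vs, es, hpath, fun i => hKW (hmem i), ?_, ⟨e₀, e₁, hne, nef _ _ (hmem _) he₀',
    nef _ _ (hmem _) he₁', he₀', he₁'⟩, fun i h0 hl e he => hint i h0 hl e
      (he.imp (And.imp_right fun h h' => h (hKW h')) (And.imp_right fun h h' => h (hKW h')))⟩
  have hesK : ∀ i, G.src (es i) ∈ K ∧ G.tgt (es i) ∈ K := by
    intro i
    rcases hpath.2.2 i with ⟨h1, h2⟩ | ⟨h1, h2⟩ <;> rw [h1, h2] <;> exact ⟨hmem _, hmem _⟩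
  refine connectedOn_of_forall_innerCut fun A hAW hA hAne => ?_
  by_contra! hnone
  obtain ⟨e, he, -⟩ := hconn.exists_mem_innerCut hAW hA hAne
  obtain ⟨i, rfl⟩ := hnone e he
  have key : ∀ u ∈ K, ∀ v ∈ K, u ∈ A → v ∉ A → False := by
    intro u hu v hv huA hvA
    obtain ⟨d, hd, hd', hdK⟩ := (hper u hu v hv).exists_mem_cutEdges huA hvA
    exact hd' (hnone d ⟨hd, hKW hdK.1, hKW hdK.2⟩)
  rcases he.1 with ⟨h1, h2⟩ | ⟨h1, h2⟩
  · exact key _ (hesK i).1 _ (hesK i).2 h1 h2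
  · exact key _ (hesK i).2 _ (hesK i).1 h2 h1

theorem IsComponent.joins_iff {G : Multigraph V E} {X W : Set V} (hW : G.IsComponent X W)
    {e : E} {y : V} (hy : y ∈ W) : G.joins e y X ↔ G.joins e y Wᶜ := by
  obtain ⟨-, hdisj, hclosed, -⟩ := hW
  constructor
  · exact Or.imp (And.imp_right fun h h' => Set.disjoint_left.1 hdisj h' h)
      (And.imp_right fun h h' => Set.disjoint_left.1 hdisj h' h)
  · rintro (⟨rfl, h⟩ | ⟨rfl, h⟩)
    · refine Or.inl ⟨rfl, ?_⟩
      by_contra hX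
      exact h (hclosed _ hy _ hX ⟨e, trivial, Or.inl ⟨rfl, rfl⟩⟩)
    · refine Or.inr ⟨rfl, ?_⟩
      by_contra hX
      exact h (hclosed _ hy _ hX ⟨e, trivial, Or.inr ⟨rfl, rfl⟩⟩)

theorem IsComponent.connectedOn {G : Multigraph V E} {X W : Set V} (hW : G.IsComponent X W) :
    G.ConnectedOn W fun _ => True := by
  obtain ⟨-, -, hclosed, hreach⟩ := hW
  refine connectedOn_of_forall_innerCut fun A hAW hA hAne => ?_
  obtain ⟨u, hu⟩ := hA
  obtain ⟨v, hv, hvA⟩ := Set.exists_of_ssubset (hAW.ssubset_of_ne hAne)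
  obtain ⟨e, he, hs, ht⟩ := (hreach u (hAW hu) v hv).exists_mem_cutEdges hu hvA
  refine ⟨e, ⟨he, ?_⟩, trivial⟩
  rcases he with ⟨h1, -⟩ | ⟨-, h1⟩
  · exact ⟨hAW h1, hclosed _ (hAW h1) _ ht ⟨e, trivial, Or.inl ⟨rfl, rfl⟩⟩⟩
  · exact ⟨hclosed _ (hAW h1) _ hs ⟨e, trivial, Or.inr ⟨rfl, rfl⟩⟩, hAW h1⟩

theorem IsComponent.isPeripheralPath {G : Multigraph V E} {X W : Set V} (hW : G.IsComponent X W)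
    {f : E} {n : ℕ} {vs : Fin (n + 1) → V} {es : Fin n → E}
    (h : G.IsPeripheralPath Wᶜ W f vs es) : G.IsPeripheralPath X W f vs es := by
  obtain ⟨hpath, hmem, hper, ⟨e₀, e₁, hne, h0, h1, he₀, he₁⟩, hint⟩ := h
  exact ⟨hpath, hmem, hper, ⟨e₀, e₁, hne, h0, h1, (hW.joins_iff (hmem _)).2 he₀,
    (hW.joins_iff (hmem _)).2 he₁⟩,
    fun i hi0 hil e he => hint i hi0 hil e ((hW.joins_iff (hmem i)).1 he)⟩

end Multigraph

/-- In a 3-edge-connected cubic graph `G`, given a nonempty proper vertex set `X`, a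
component `H` of `G − X` (with vertex set `W`) and an edge `f ∈ E(X, V(H))`, there is a
(possibly trivial) path `P ⊆ H` with ends `y₀ = vs 0` and `y₁ = vs (last n)` which is
peripheral in `H`, such that there are distinct edges `e₀ ∈ E(y₀,X) \ {f}` and
`e₁ ∈ E(y₁,X) \ {f}`, and no internal vertex of `P` has a neighbour in `X`.
Moreover, if `H` is 2-edge-connected and `y₀ ∈ V(H)` is prescribed with
`E(y₀,X) \ {f} ≠ ∅`, such a path can be chosen starting at `y₀`. -/
theorem peripheral_path_lemma {V E : Type} [Fintype V] [Fintype E]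
    (G : Multigraph V E) (hG : G.EdgeConnected 3) (hcubic : G.Cubic)
    (X : Set V) (hXne : X.Nonempty) (hXproper : X ≠ Set.univ)
    (W : Set V) (hW : G.IsComponent X W)
    (f : E) (hf : ∃ x ∈ X, ∃ w ∈ W,
      (G.src f = x ∧ G.tgt f = w) ∨ (G.src f = w ∧ G.tgt f = x)) :
    ((∃ (n : ℕ) (vs : Fin (n + 1) → V) (es : Fin n → E),
      G.IsPath vs es ∧ (∀ i, vs i ∈ W) ∧
      G.ConnectedOn W (fun e => e ∉ Set.range es) ∧
      (∃ e₀ e₁ : E, e₀ ≠ e₁ ∧ e₀ ≠ f ∧ e₁ ≠ f ∧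
        G.joins e₀ (vs 0) X ∧ G.joins e₁ (vs (Fin.last n)) X) ∧
      (∀ i : Fin (n + 1), i ≠ 0 → i ≠ Fin.last n → ∀ e : E, ¬ G.joins e (vs i) X)) ∧
    (G.EdgeConnectedOn W 2 →
      ∀ y₀ ∈ W, (∃ e : E, e ≠ f ∧ G.joins e y₀ X) →
      ∃ (n : ℕ) (vs : Fin (n + 1) → V) (es : Fin n → E),
        vs 0 = y₀ ∧ G.IsPath vs es ∧ (∀ i, vs i ∈ W) ∧
        G.ConnectedOn W (fun e => e ∉ Set.range es) ∧
        (∃ e₀ e₁ : E, e₀ ≠ e₁ ∧ e₀ ≠ f ∧ e₁ ≠ f ∧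
          G.joins e₀ (vs 0) X ∧ G.joins e₁ (vs (Fin.last n)) X) ∧
        (∀ i : Fin (n + 1), i ≠ 0 → i ≠ Fin.last n → ∀ e : E, ¬ G.joins e (vs i) X))) := by
  obtain ⟨x, hx, w, hw, hfxw⟩ := hf
  have hxW : x ∉ W := fun h => Set.disjoint_left.1 hW.2.1 h hx
  have hWne : W ≠ Set.univ := fun h => hxW (h ▸ Set.mem_univ x)
  have hfcut : f ∈ G.cutEdges W := by
    rcases hfxw with ⟨rfl, rfl⟩ | ⟨rfl, rfl⟩
    · exact Or.inr ⟨hxW, hw⟩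
    · exact Or.inl ⟨hw, hxW⟩
  constructor
  · obtain ⟨n, vs, es, h⟩ :=
      Multigraph.exists_isPeripheralPath hG hcubic hWne hW.connectedOn hfcut
    exact ⟨n, vs, es, hW.isPeripheralPath h⟩
  · rintro h2 y₀ hy₀ ⟨e, hef, hey⟩
    obtain ⟨n, vs, es, hvs, h⟩ := h2.exists_isPeripheralPath hG hcubic hWne hfcut hy₀
      ⟨e, hef, (hW.joins_iff hy₀).1 hey⟩
    exact ⟨n, vs, es, hvs, hW.isPeripheralPath h⟩
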